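/- Let (V, J_n, L_n) be a Sugawara system with vacuum vector Ω, let α ∈ ℝ with α ≠ 0, and set c := 2(1 + 12α²) (so c > 2). Let ρ be the unitary representation of 𝔎 on V with ρ(k_n) = K^{(α,2)}_n (n ∈ ℤ ∖ {0}) and ρ(C) = c·id. Then ρ(k_n)Ω = (c/32)Ω for all n > 0; there exists μ ∈ ℂ ∖ {0} such that Φ := J_{−1}Ω + μΩ satisfies ρ(k_n)Φ = (c/32 + 1/2)Φ for all n > 0; and ⟨Ω, Φ⟩ ≠ 0, so that the smallest ρ-invariant subspaces of V containing Ω and containing Φ, respectively, are not mutually orthogonal. -/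

import Mathlib

/-!
The argument rests on one commutator: for `0 < m < 2n`,
`[K_n, J_{-m}] = m ((J_{-m} - J_{2n-m}) / 2 - iα)`.
The scalar comes from the single mode `J_m` of `∑ J_k` that does not commute with `J_{-m}`, and it
does not depend on `n`, because for `n > 0` the prefactor `n` of the sum cancels against
`1 / (2|n|)`.  Since `K_n Ω = (c/32) Ω` and `J_{2n-m} Ω = 0`, the operator `K_n` acts on the span of
`J_{-m} Ω` and `Ω` by a triangular matrix with eigenvalues `c/32 + m/2` and `c/32`, and
`J_{-m} Ω - 2iα Ω` is the eigenvector for the former.  As `J_{-m} Ω ⟂ Ω`, its inner product with `Ω`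
is `-2iα`.
-/

local notation "⟪" x ", " y "⟫" => @inner ℂ _ _ x y

/-- A unitary representation of the Lie algebra `𝔎` (the subalgebra of the
Virasoro algebra spanned by `{k_n = l_0 - l_n : n ∈ ℤ ∖ {0}} ∪ {C}`) on a
complex inner product space `V`, described through the images
`K n` of the basis elements `k n` (with `K 0 = 0`, since `k_0 = 0`) and the
image `Cop` of `C`.  The fields record precisely the bracket relations
`[k_r, k_m] = r k_r - m k_m - (r-m) k_{r+m} + (C/12)(r³-r) δ_{r+m,0}`,
`[k_r, C] = 0` of `𝔎`, and unitarity with respect to the involution `θ`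
determined by `θ(k_n) = k_{-n}`, `θ(C) = C`. -/
structure KRep (V : Type*) [NormedAddCommGroup V] [InnerProductSpace ℂ V] where
  K : ℤ → Module.End ℂ V
  Cop : Module.End ℂ V
  K_zero : K 0 = 0
  comm : ∀ r m : ℤ, ⁅K r, K m⁆ =
    (r : ℂ) • K r - (m : ℂ) • K m - ((r - m : ℤ) : ℂ) • K (r + m) +
      (if r + m = 0 then (((r ^ 3 - r : ℤ) : ℂ) / 12) • Cop else 0)
  commC : ∀ r : ℤ, ⁅K r, Cop⁆ = 0
  unitary : ∀ (n : ℤ) (u v : V), ⟪K n u, v⟫ = ⟪u, K (-n) v⟫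
  unitaryC : ∀ u v : V, ⟪Cop u, v⟫ = ⟪u, Cop v⟫
/-- A Sugawara system on a complex inner product space `V`: a `U(1)` current
`J` together with the associated stress-energy operators `L` (central charge
`1`), satisfying `[J_n, J_m] = n δ_{n+m,0}`, `J_n⁺ = J_{-n}`,
`[L_n, L_m] = (n-m) L_{n+m} + (1/12)(n³-n) δ_{n+m,0}`, `L_n⁺ = L_{-n}`, and
`[L_n, J_m] = -m J_{n+m}`. -/
structure Sugawara (V : Type*) [NormedAddCommGroup V] [InnerProductSpace ℂ V] where
  J : ℤ → Module.End ℂ V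
  L : ℤ → Module.End ℂ V
  commJJ : ∀ n m : ℤ, ⁅J n, J m⁆ =
    (if n + m = 0 then (n : ℂ) • (1 : Module.End ℂ V) else 0)
  unitaryJ : ∀ (n : ℤ) (u v : V), ⟪J n u, v⟫ = ⟪u, J (-n) v⟫
  commLL : ∀ n m : ℤ, ⁅L n, L m⁆ =
    ((n - m : ℤ) : ℂ) • L (n + m) +
      (if n + m = 0 then (((n ^ 3 - n : ℤ) : ℂ) / 12) • (1 : Module.End ℂ V) else 0)
  unitaryL : ∀ (n : ℤ) (u v : V), ⟪L n u, v⟫ = ⟪u, L (-n) v⟫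
  commLJ : ∀ n m : ℤ, ⁅L n, J m⁆ = (-(m : ℂ)) • J (n + m)

variable {V : Type*} [NormedAddCommGroup V] [InnerProductSpace ℂ V]
/-- `K^{(α,2)}_n = (1/2)(L_0 - L_{2n}) + i n α (J_{2n} + (1/(2|n|))(J_0 + J_{2n}
- 2 Σ_{k=min(0,2n)}^{max(0,2n)} J_k)) + ((1 + 12α²)/16)·id`. -/
noncomputable def Kalpha2 (S : Sugawara V) (α : ℝ) (n : ℤ) : Module.End ℂ V :=
  ((1 : ℂ) / 2) • (S.L 0 - S.L (2 * n)) +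
    (Complex.I * (n : ℂ) * (α : ℂ)) •
      (S.J (2 * n) + ((2 * |n| : ℤ) : ℂ)⁻¹ •
        (S.J 0 + S.J (2 * n) -
          (2 : ℂ) • ∑ k ∈ Finset.Icc (min 0 (2 * n)) (max 0 (2 * n)), S.J k)) +
    (((1 + 12 * α ^ 2 : ℝ) : ℂ) / 16) • (1 : Module.End ℂ V)

/-- The smallest subspace of `V` containing `x` and invariant under a
representation `P` of `𝔎`. -/
def minInv (P : KRep V) (x : V) : Submodule ℂ V :=
  sInf {W : Submodule ℂ V | x ∈ W ∧ (∀ n : ℤ, ∀ w ∈ W, P.K n w ∈ W) ∧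
    ∀ w ∈ W, P.Cop w ∈ W}

namespace Sugawara

attribute [local instance] LieRing.ofAssociativeRing

/-- A vacuum vector of a Sugawara system: a vector annihilated by all the modes `J n` and `L n` with
`n ≥ 0`.  The normalisation `‖Ω‖ = 1` is kept separate. -/
structure IsVacuum (S : Sugawara V) (Ω : V) : Prop where
  J_apply : ∀ n : ℤ, 0 ≤ n → S.J n Ω = 0
  L_apply : ∀ n : ℤ, 0 ≤ n → S.L n Ω = 0

variable (S : Sugawara V)

lemma lie_sum_J_J_neg (s : Finset ℤ) (m : ℤ) :
    ⁅∑ k ∈ s, S.J k, S.J (-m)⁆ = if m ∈ s then (m : ℂ) • (1 : Module.End ℂ V) else 0 := by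
  simp only [sum_lie, S.commJJ, ← sub_eq_add_neg, sub_eq_zero, Finset.sum_ite_eq']

lemma lie_J_J_neg_of_ne {k m : ℤ} (h : k ≠ m) : ⁅S.J k, S.J (-m)⁆ = 0 := by
  rw [S.commJJ, if_neg (by omega)]

lemma lie_L_J_neg (n m : ℤ) : ⁅S.L n, S.J (-m)⁆ = (m : ℂ) • S.J (n - m) := by
  rw [S.commLJ, Int.cast_neg, neg_neg, sub_eq_add_neg]

lemma Kalpha2_of_pos (α : ℝ) {n : ℤ} (hn : 0 < n) :
    Kalpha2 S α n = (1 / 2 : ℂ) • (S.L 0 - S.L (2 * n)) +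
      (Complex.I * α) • ((n : ℂ) • S.J (2 * n) + (1 / 2 : ℂ) • (S.J 0 + S.J (2 * n)) -
        ∑ k ∈ Finset.Icc 0 (2 * n), S.J k) +
      (((1 + 12 * α ^ 2) / 16 : ℝ) : ℂ) • (1 : Module.End ℂ V) := by
  have hn' : (n : ℂ) ≠ 0 := by exact_mod_cast hn.ne'
  have h2n : 0 ≤ 2 * n := by omega
  rw [Kalpha2, abs_of_pos hn, min_eq_left h2n, max_eq_right h2n]
  push_cast
  match_scalars <;> field_simp

lemma lie_Kalpha2_J_neg (α : ℝ) {n m : ℤ} (hm : 0 < m) (hmn : m < 2 * n) :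
    ⁅Kalpha2 S α n, S.J (-m)⁆ =
      (m : ℂ) • ((1 / 2 : ℂ) • (S.J (-m) - S.J (2 * n - m)) -
        (Complex.I * α) • (1 : Module.End ℂ V)) := by
  have hmem : m ∈ Finset.Icc 0 (2 * n) := Finset.mem_Icc.2 ⟨hm.le, hmn.le⟩
  have hone_lie : ⁅(1 : Module.End ℂ V), S.J (-m)⁆ = 0 := (Commute.one_left _).lie_eq
  simp only [S.Kalpha2_of_pos α (show 0 < n by omega), add_lie, sub_lie, smul_lie,
    lie_sum_J_J_neg, if_pos hmem, S.lie_J_J_neg_of_ne hm.ne, S.lie_J_J_neg_of_ne hmn.ne',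
    lie_L_J_neg, hone_lie, zero_sub]
  module

lemma inner_J_neg_eq_zero {n : ℤ} {v : V} (hv : S.J n v = 0) (w : V) :
    ⟪v, S.J (-n) w⟫ = 0 := by
  rw [← S.unitaryJ, hv, inner_zero_left]

variable {S} {Ω : V}

lemma IsVacuum.Kalpha2_apply (hΩ : S.IsVacuum Ω) (α : ℝ) {n : ℤ} (hn : 0 < n) :
    Kalpha2 S α n Ω = (((1 + 12 * α ^ 2) / 16 : ℝ) : ℂ) • Ω := by
  have hsum : ∑ k ∈ Finset.Icc 0 (2 * n), S.J k Ω = 0 :=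
    Finset.sum_eq_zero fun k hk => hΩ.J_apply k (Finset.mem_Icc.1 hk).1
  have h2n : 0 ≤ 2 * n := by omega
  simp only [S.Kalpha2_of_pos α hn, LinearMap.add_apply, LinearMap.sub_apply,
    LinearMap.smul_apply, LinearMap.sum_apply, Module.End.one_apply, hsum, hΩ.J_apply 0 le_rfl,
    hΩ.J_apply _ h2n, hΩ.L_apply 0 le_rfl, hΩ.L_apply _ h2n, add_zero, sub_zero, smul_zero,
    zero_add]

lemma IsVacuum.Kalpha2_apply_J_neg_add_smul (hΩ : S.IsVacuum Ω) (α : ℝ) {n m : ℤ} (hm : 0 < m)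
    (hmn : m < 2 * n) :
    Kalpha2 S α n (S.J (-m) Ω + (-2 * Complex.I * α) • Ω) =
      (((1 + 12 * α ^ 2) / 16 + m / 2 : ℝ) : ℂ) • (S.J (-m) Ω + (-2 * Complex.I * α) • Ω) := by
  have hK := hΩ.Kalpha2_apply α (show 0 < n by omega)
  have hKJ : Kalpha2 S α n (S.J (-m) Ω) = S.J (-m) (Kalpha2 S α n Ω) +
      (m : ℂ) • ((1 / 2 : ℂ) • S.J (-m) Ω - (Complex.I * α) • Ω) := by
    have hlie := LinearMap.congr_fun (S.lie_Kalpha2_J_neg α hm hmn) Ω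
    simpa only [Ring.lie_def, LinearMap.sub_apply, LinearMap.smul_apply, Module.End.mul_apply,
      Module.End.one_apply, hΩ.J_apply (2 * n - m) (by omega), sub_zero,
      sub_eq_iff_eq_add'] using hlie
  rw [map_add, map_smul, hKJ, hK, map_smul]
  push_cast
  module

end Sugawara

lemma mem_minInv_self (P : KRep V) (x : V) : x ∈ minInv P x :=
  Submodule.mem_sInf.2 fun _ hW => hW.1

/-- Let `α ≠ 0`, `c = 2(1 + 12α²)`, and let `ρ` be the unitary representation
of `𝔎` with `ρ (k n) = K^{(α,2)}_n` (`n ≠ 0`) and `ρ C = c • 1`, on a Sugawara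
system with vacuum vector `Ω`.  Then `ρ (k n) Ω = (c/32) • Ω` for all `n > 0`;
there is `μ ≠ 0` such that `Φ := J₋₁ Ω + μ • Ω` satisfies
`ρ (k n) Φ = (c/32 + 1/2) • Φ` for all `n > 0`; and `⟪Ω, Φ⟫ ≠ 0`, so that the
smallest `ρ`-invariant subspaces containing `Ω` and `Φ` are not mutually
orthogonal. -/
theorem statement13 (S : Sugawara V) (Ω : V) (hΩ : ‖Ω‖ = 1)
    (hJΩ : ∀ n : ℤ, 0 ≤ n → S.J n Ω = 0) (hLΩ : ∀ n : ℤ, 0 ≤ n → S.L n Ω = 0)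
    (α : ℝ) (hα : α ≠ 0) (c : ℝ) (hc : c = 2 * (1 + 12 * α ^ 2))
    (ρ : KRep V) (hρ : ∀ n : ℤ, n ≠ 0 → ρ.K n = Kalpha2 S α n)
    (hρC : ρ.Cop = (c : ℂ) • (1 : Module.End ℂ V)) :
    (∀ n : ℤ, 0 < n → ρ.K n Ω = ((c / 32 : ℝ) : ℂ) • Ω) ∧
    ∃ μ : ℂ, μ ≠ 0 ∧
      (∀ n : ℤ, 0 < n →
        ρ.K n (S.J (-1) Ω + μ • Ω) =
          ((c / 32 + 1 / 2 : ℝ) : ℂ) • (S.J (-1) Ω + μ • Ω)) ∧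
      (⟪Ω, S.J (-1) Ω + μ • Ω⟫ : ℂ) ≠ 0 ∧
      ¬ (∀ u ∈ minInv ρ Ω, ∀ v ∈ minInv ρ (S.J (-1) Ω + μ • Ω),
          (⟪u, v⟫ : ℂ) = 0) := by
  have hvac : S.IsVacuum Ω := ⟨hJΩ, hLΩ⟩
  have hc32 : c / 32 = (1 + 12 * α ^ 2) / 16 := by rw [hc]; ring
  have hμ : -2 * Complex.I * (α : ℂ) ≠ 0 := by simp [hα]
  have hinner : ⟪Ω, S.J (-1) Ω + (-2 * Complex.I * α) • Ω⟫ ≠ 0 := by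
    rwa [inner_add_right, S.inner_J_neg_eq_zero (hJΩ 1 zero_le_one), inner_smul_right,
      inner_self_eq_one_of_norm_eq_one hΩ, mul_one, zero_add]
  refine ⟨fun n hn => ?_, -2 * Complex.I * α, hμ, fun n hn => ?_, hinner, fun horth =>
    hinner (horth _ (mem_minInv_self ρ _) _ (mem_minInv_self ρ _))⟩
  · rw [hρ n hn.ne', hc32, hvac.Kalpha2_apply α hn]
  · rw [hρ n hn.ne', hc32, hvac.Kalpha2_apply_J_neg_add_smul α one_pos (by omega), Int.cast_one]
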